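/- arXiv:1704.03083 — 2 statements merged into one kernel-verified Lean document; each statement's English description precedes it below -/
import Mathlib

section
/- If G is a finite group with S(G) = |G|, then every subgroup H of G satisfying φ(H) ≠ 0 is cyclic; equivalently, φ(H) = 0 for every non-cyclic subgroup H of G. -/
/-- `phiG G` is the number of elements of `G` whose order equals the exponent of `G`. -/
noncomputable def phiG (G : Type*) [Group G] : ℕ :=
  Nat.card {a : G // orderOf a = Monoid.exponent G}

/-- `SG G` is the sum of `phiG H` over all subgroups `H` of `G`. -/
noncomputable def SG (G : Type*) [Group G] : ℕ :=
  ∑ᶠ H : Subgroup G, phiG H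

/-!
`S(G)` counts the pairs `(H, a)` with `a ∈ H` and `o(a) = exp(H)`. The pairs `(⟨g⟩, g)` already
account for `|G|` of them, so when `S(G) = |G|` there are no others, and every `H` that occurs in
a pair is some `⟨g⟩`.
-/

section

variable {G : Type*} [Group G]

theorem orderOf_eq_exponent_zpowers (g : G) :
    orderOf g = Monoid.exponent (Subgroup.zpowers g) := by
  rw [IsCyclic.exponent_eq_card, Nat.card_zpowers]

variable (G) in
/-- The pairs `(H, a)` of a subgroup `H` of `G` and an element `a` of `H` whose order is the
exponent of `H`; for finite `G` these are the objects counted by `SG G`. -/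
abbrev ExponentPair : Type _ :=
  Σ H : Subgroup G, {a : H // orderOf a = Monoid.exponent H}

variable (G) in
theorem card_exponentPair [Finite G] : Nat.card (ExponentPair G) = SG G := by
  have := Fintype.ofFinite (Subgroup G)
  rw [Nat.card_sigma, SG, finsum_eq_sum_of_fintype]
  rfl

namespace ExponentPair

/-- The pair `(⟨g⟩, g)`, which embeds `G` into its exponent pairs. -/
def ofElement (g : G) : ExponentPair G :=
  ⟨Subgroup.zpowers g, ⟨g, Subgroup.mem_zpowers g⟩,
    (Subgroup.orderOf_mk _ _).trans (orderOf_eq_exponent_zpowers g)⟩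

theorem ofElement_injective : Function.Injective (ofElement : G → ExponentPair G) :=
  Function.LeftInverse.injective (g := fun x ↦ (x.2.1 : G)) fun _ ↦ rfl

theorem ofElement_surjective_of_SG_le_card [Finite G] (h : SG G ≤ Nat.card G) :
    Function.Surjective (ofElement : G → ExponentPair G) :=
  (ofElement_injective.bijective_of_nat_card_le ((card_exponentPair G).trans_le h)).surjective

end ExponentPair

end

theorem phi_ne_zero_imp_cyclic_of_S_eq_card (G : Type*) [Group G] [Fintype G]
    (h : SG G = Nat.card G) :
    ∀ H : Subgroup G, phiG H ≠ 0 → IsCyclic H := by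
  intro H hH
  obtain ⟨a⟩ : Nonempty {a : H // orderOf a = Monoid.exponent H} := (Nat.card_ne_zero.mp hH).1
  obtain ⟨g, hg⟩ := ExponentPair.ofElement_surjective_of_SG_le_card h.le ⟨H, a⟩
  have hgen : Subgroup.zpowers g = H := congrArg Sigma.fst hg
  exact hgen ▸ inferInstance
end

section
/- If G is a finite group with S(G) = |G|, then every Sylow subgroup of G is cyclic. -/
/-!
Every element of a finite group `G` generates exactly one cyclic subgroup, so `|G|` is the sum over
all subgroups `H ≤ G` of the number of single generators of `H`. Such a generator has order
`exp H`, so this sum is termwise at most `S(G)`, and `S(G) = |G|` forces equality in every term: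
a subgroup containing an element whose order is its exponent must be cyclic. A finite `p`-group
contains such an element because its exponent is a power of `p`.
-/

open Subgroup (zpowers)

theorem exists_orderOf_eq_exponent_of_exponent_eq_prime_pow {M : Type*} [Monoid M] {p k : ℕ}
    (hp : p.Prime) (hM : Monoid.exponent M = p ^ k) :
    ∃ a : M, orderOf a = Monoid.exponent M := by
  obtain ⟨a, ha⟩ := hp.exists_orderOf_eq_pow_factorization_exponent M
  exact ⟨a, by rw [ha, hM, hp.factorization_pow, Finsupp.single_eq_same]⟩

section Generators

variable {G : Type*} [Group G]

theorem orderOf_eq_exponent_of_zpowers_eq_top {a : G} (ha : zpowers a = ⊤) :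
    orderOf a = Monoid.exponent G := by
  have : IsCyclic G := isCyclic_iff_exists_zpowers_eq_top.mpr ⟨a, ha⟩
  rw [orderOf_eq_card_of_zpowers_eq_top ha, IsCyclic.exponent_eq_card]

theorem zpowers_eq_top_iff_orderOf_eq_exponent [Finite G] [IsCyclic G] {a : G} :
    zpowers a = ⊤ ↔ orderOf a = Monoid.exponent G := by
  rw [← Subgroup.card_eq_iff_eq_top, Nat.card_zpowers, IsCyclic.exponent_eq_card]

variable (G)

/-- The number of elements that generate `G` on their own, which is `0` when `G` is not cyclic.
It is the contribution of `G`, as a subgroup, to the order of any finite group containing it. -/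
noncomputable def numGenerators : ℕ :=
  Nat.card {a : G // zpowers a = ⊤}

theorem numGenerators_le_phiG [Finite G] : numGenerators G ≤ phiG G :=
  Nat.card_le_card_of_injective _
    (Subtype.impEmbedding _ _ fun _ ↦ orderOf_eq_exponent_of_zpowers_eq_top).injective

theorem numGenerators_eq_phiG [Finite G] [IsCyclic G] : numGenerators G = phiG G :=
  Nat.card_congr <| Equiv.subtypeEquivRight fun _ ↦ zpowers_eq_top_iff_orderOf_eq_exponent

variable {G}

theorem isCyclic_of_numGenerators_ne_zero (hG : numGenerators G ≠ 0) : IsCyclic G := by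
  obtain ⟨⟨a, ha⟩⟩ := (Nat.card_ne_zero.mp hG).1
  exact isCyclic_iff_exists_zpowers_eq_top.mpr ⟨a, ha⟩

theorem numGenerators_eq_phiG_iff [Finite G] :
    numGenerators G = phiG G ↔ (phiG G ≠ 0 → IsCyclic G) := by
  refine ⟨fun h hG ↦ isCyclic_of_numGenerators_ne_zero (h ▸ hG), fun h ↦ ?_⟩
  by_cases hG : phiG G = 0
  · exact (numGenerators_le_phiG G).antisymm (hG ▸ Nat.zero_le _)
  · have := h hG
    exact numGenerators_eq_phiG G

theorem phiG_ne_zero_iff [Finite G] : phiG G ≠ 0 ↔ ∃ a : G, orderOf a = Monoid.exponent G := by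
  rw [phiG, Nat.card_ne_zero, and_iff_left Subtype.finite, nonempty_subtype]

theorem numGenerators_eq_card_zpowers_eq (H : Subgroup G) :
    numGenerators H = Nat.card {g : G // zpowers g = H} := by
  have zpowers_coe_eq_iff (a : H) : zpowers a = ⊤ ↔ zpowers (a : G) = H := by
    rw [← (Subgroup.map_injective H.subtype_injective).eq_iff, MonoidHom.map_zpowers,
      ← MonoidHom.range_eq_map, H.range_subtype, H.coe_subtype]
  calc numGenerators H
    _ = Nat.card {a : H // zpowers (a : G) = H} :=
      Nat.card_congr <| Equiv.subtypeEquivRight zpowers_coe_eq_iff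
    _ = Nat.card {g : G // zpowers g = H} :=
      Nat.card_congr <| Equiv.subtypeSubtypeEquivSubtype (q := fun g ↦ zpowers g = H)
        fun {g} hg ↦ hg ▸ Subgroup.mem_zpowers g

theorem finsum_numGenerators_eq_card [Finite G] :
    ∑ᶠ H : Subgroup G, numGenerators H = Nat.card G := by
  have := Fintype.ofFinite (Subgroup G)
  simp_rw [finsum_eq_sum_of_fintype, numGenerators_eq_card_zpowers_eq]
  rw [← Nat.card_sigma, Nat.card_congr (Equiv.sigmaFiberEquiv zpowers)]

theorem SG_eq_card_iff [Finite G] :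
    SG G = Nat.card G ↔ ∀ H : Subgroup G, phiG H ≠ 0 → IsCyclic H := by
  have := Fintype.ofFinite (Subgroup G)
  rw [← finsum_numGenerators_eq_card, SG, finsum_eq_sum_of_fintype, finsum_eq_sum_of_fintype,
    eq_comm, Finset.sum_eq_sum_iff_of_le fun (H : Subgroup G) _ ↦
      numGenerators_le_phiG H]
  simp only [Finset.mem_univ, true_imp_iff, numGenerators_eq_phiG_iff]

end Generators

theorem sylow_cyclic_of_S_eq_card (G : Type*) [Group G] [Fintype G]
    (h : SG G = Nat.card G) :
    ∀ (p : ℕ), p.Prime → ∀ P : Sylow p G, IsCyclic P := by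
  intro p hp P
  have : Fact p.Prime := ⟨hp⟩
  obtain ⟨k, hk⟩ := P.isPGroup'.exists_exponent_eq_pow
  exact SG_eq_card_iff.mp h P <|
    phiG_ne_zero_iff.mpr <| exists_orderOf_eq_exponent_of_exponent_eq_prime_pow hp hk
end
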